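/- Let N be a positive integer, h = (h₁,h₂) ∈ ℤ², and t > 0. Then for every τ ∈ H the series defining Θ_h(τ,t) and Θ̃_h(τ,t) converge absolutely, and the function τ ↦ Θ̃_h(τ,t) satisfies ξ(Θ̃_h(·,t))(τ) = Θ_h(τ,t), i.e. 2iv·conj( ∂/∂conj(τ) Θ̃_h(τ,t) ) = Θ_h(τ,t). -/

import Mathlib

open MeasureTheory Filter Set

noncomputable section

/-- `e(z) = exp(2πiz)` -/
def eC (z : ℂ) : ℂ := Complex.exp (2 * Real.pi * Complex.I * z)

/-- The complementary error function `erfc(x) = (2/√π)∫_x^∞ e^{-r²} dr`. -/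
def erfc (x : ℝ) : ℝ := (2 / Real.sqrt Real.pi) * ∫ r in Set.Ioi x, Real.exp (-(r ^ 2))

/-- `φ_τ(x,y) = √(2v)·x·e((x²/2)τ - (y²/2)·conj τ)` where `v = Im τ`. -/
def phi (τ : ℂ) (x y : ℝ) : ℂ :=
  (Real.sqrt (2 * τ.im) : ℂ) * (x : ℂ) *
    eC (((x : ℂ) ^ 2 / 2) * τ - ((y : ℂ) ^ 2 / 2) * (starRingEnd ℂ) τ)

/-- `φ*_τ(x,y) = e(((y²-x²)/2)τ)·sgn(x)·erfc(√(2πv)|x|)`. -/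
def phiStar (τ : ℂ) (x y : ℝ) : ℂ :=
  eC ((((y : ℂ) ^ 2 - (x : ℂ) ^ 2) / 2) * τ) * (Real.sign x : ℂ) *
    (erfc (Real.sqrt (2 * Real.pi * τ.im) * |x|) : ℂ)

/-- `φ⁺_τ(x,y) = e(((y²-x²)/2)τ)·sgn(x)·1_{y²>x²}`. -/
def phiPlus (τ : ℂ) (x y : ℝ) : ℂ :=
  eC ((((y : ℂ) ^ 2 - (x : ℂ) ^ 2) / 2) * τ) * (Real.sign x : ℂ) *
    (if x ^ 2 < y ^ 2 then 1 else 0)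

/-- `φ̃_τ = φ⁺_τ - φ*_τ`. -/
def phiTilde (τ : ℂ) (x y : ℝ) : ℂ := phiPlus τ x y - phiStar τ x y

/-- The isometry `ι_t(x₁,x₂) = ((t⁻¹x₁+tx₂)/√(2N), (t⁻¹x₁-tx₂)/√(2N))`. -/
def iota (N : ℕ) (t x₁ x₂ : ℝ) : ℝ × ℝ :=
  ((t⁻¹ * x₁ + t * x₂) / Real.sqrt (2 * N), (t⁻¹ * x₁ - t * x₂) / Real.sqrt (2 * N))

/-- `⟨x⟩ ∈ (0,1]`, the representative of `x` modulo `ℤ` lying in `(0,1]`. -/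
def frac01 (x : ℝ) : ℝ := x - ⌈x⌉ + 1

/-- The constant coefficient `c_h(0)`. -/
def cH0 (N : ℕ) (h : ℤ × ℤ) : ℝ :=
  if ¬ ((N : ℤ) ∣ h.1) ∧ (N : ℤ) ∣ h.2 then 1 / 2 - frac01 ((h.1 : ℝ) / N)
  else if ((N : ℤ) ∣ h.1) ∧ ¬ ((N : ℤ) ∣ h.2) then 1 / 2 - frac01 ((h.2 : ℝ) / N)
  else 0

/-- `Θ_h(τ,t) = Σ_{x ≡ h (N)} φ_τ(ι_t(x₁,x₂))`; the index `p ∈ ℤ²` corresponds to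
`x_j = h_j + N·p_j`. -/
def Theta (N : ℕ) (h : ℤ × ℤ) (τ : ℂ) (t : ℝ) : ℂ :=
  ∑' p : ℤ × ℤ,
    phi τ (iota N t ((h.1 + N * p.1 : ℤ) : ℝ) ((h.2 + N * p.2 : ℤ) : ℝ)).1
          (iota N t ((h.1 + N * p.1 : ℤ) : ℝ) ((h.2 + N * p.2 : ℤ) : ℝ)).2

/-- `Θ̃_h(τ,t) = c_h(0) + Σ_{x ≡ h (N)} φ̃_τ(ι_t(x₁,x₂))`. -/
def ThetaTilde (N : ℕ) (h : ℤ × ℤ) (τ : ℂ) (t : ℝ) : ℂ :=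
  (cH0 N h : ℂ) + ∑' p : ℤ × ℤ,
    phiTilde τ (iota N t ((h.1 + N * p.1 : ℤ) : ℝ) ((h.2 + N * p.2 : ℤ) : ℝ)).1
               (iota N t ((h.1 + N * p.1 : ℤ) : ℝ) ((h.2 + N * p.2 : ℤ) : ℝ)).2

/-- The Wirtinger derivative `∂f/∂conj(τ) = (1/2)(∂f/∂u + i·∂f/∂v)`. -/
def dbar (f : ℂ → ℂ) (τ : ℂ) : ℂ :=
  (1 / 2) * (fderiv ℝ f τ 1 + Complex.I * fderiv ℝ f τ Complex.I)

/-- The `ξ`-operator in weight one: `ξ(f)(τ) = 2iv·conj(∂f/∂conj(τ))`. -/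
def xi (f : ℂ → ℂ) (τ : ℂ) : ℂ :=
  2 * Complex.I * (τ.im : ℂ) * (starRingEnd ℂ) (dbar f τ)

/-!
Each summand satisfies `ξ(φ̃_τ(x, y)) = φ_τ(x, y)`: the factor `e(((y² - x²)/2)τ)` is holomorphic and
`φ̃` depends on `conj τ` only through `erfc(√(2πv)|x|)`, whose derivative is a Gaussian. The constant
`c_h(0)` is killed by `ξ`, so it remains to differentiate the series term by term. The terms and
their derivatives decay like `exp(-δ(x² + y²))`, apart from the contribution of `φ⁺`, which lives on
the cone `y² > x²` and only decays like `exp(-δ(y² - x²))`. At a lattice point `ι_t(m, n)` one has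
`y² - x² = -2mn/N`; inside the cone `m` and `n` are nonzero integers, so this form dominates
`|m| + |n|` there although it is indefinite.
-/

open scoped Real ComplexConjugate

section Real

lemma real_sign_mul_abs (x : ℝ) : Real.sign x * |x| = x := by
  rcases lt_trichotomy x 0 with hx | rfl | hx
  · rw [Real.sign_of_neg hx, abs_of_neg hx, neg_one_mul, neg_neg]
  · rw [abs_zero, mul_zero]
  · rw [Real.sign_of_pos hx, abs_of_pos hx, one_mul]

lemma abs_real_sign_le_one (x : ℝ) : |Real.sign x| ≤ 1 := by
  rcases Real.sign_apply_eq x with hx | hx | hx <;> simp [hx]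

lemma mul_exp_neg_mul_le {w : ℝ} (hw : 0 < w) (b : ℝ) :
    b * Real.exp (-(w * b)) ≤ 2 / w * Real.exp (-(w / 2 * b)) := by
  have h_unit : w / 2 * b * Real.exp (-(w / 2 * b)) ≤ 1 :=
    (Real.mul_exp_neg_le_exp_neg_one _).trans (Real.exp_le_one_iff.mpr (by norm_num))
  have h_split : Real.exp (-(w * b)) = Real.exp (-(w / 2 * b)) * Real.exp (-(w / 2 * b)) := by
    rw [← Real.exp_add]
    congr 1
    ring
  calc b * Real.exp (-(w * b))
      = 2 / w * (w / 2 * b * Real.exp (-(w / 2 * b))) * Real.exp (-(w / 2 * b)) := by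
        rw [h_split]
        field_simp
    _ ≤ 2 / w * 1 * Real.exp (-(w / 2 * b)) := by gcongr
    _ = 2 / w * Real.exp (-(w / 2 * b)) := by rw [mul_one]

lemma summable_exp_neg_mul_abs_int {δ : ℝ} (hδ : 0 < δ) :
    Summable fun n : ℤ => Real.exp (-(δ * |(n : ℝ)|)) := by
  have h_nat : Summable fun n : ℕ => Real.exp (-(δ * n)) := by
    simpa only [mul_neg, mul_comm] using Real.summable_exp_nat_mul_iff.mpr (neg_lt_zero.mpr hδ)
  apply Summable.of_nat_of_neg <;> simpa using h_nat

lemma abs_intCast_le_sq (m : ℤ) : |(m : ℝ)| ≤ (m : ℝ) ^ 2 := by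
  have h_int : |m| ≤ m ^ 2 := by simpa only [sq_abs] using Int.le_self_sq |m|
  exact_mod_cast h_int

lemma add_abs_le_two_mul_abs_mul_intCast {m n : ℤ} (hm : m ≠ 0) (hn : n ≠ 0) :
    |(m : ℝ)| + |(n : ℝ)| ≤ 2 * |(m * n : ℝ)| := by
  have hm1 : (1 : ℝ) ≤ |(m : ℝ)| := by exact_mod_cast Int.one_le_abs hm
  have hn1 : (1 : ℝ) ≤ |(n : ℝ)| := by exact_mod_cast Int.one_le_abs hn
  rw [abs_mul]
  nlinarith

end Real

section Erfc

lemma integrable_exp_neg_sq : Integrable fun r : ℝ => Real.exp (-(r ^ 2)) := by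
  simpa using integrable_exp_neg_mul_sq one_pos

lemma integral_Ioi_zero_exp_neg_sq : ∫ r in Ioi (0 : ℝ), Real.exp (-(r ^ 2)) = √π / 2 := by
  simpa using integral_gaussian_Ioi 1

lemma erfc_eq_one_sub (x : ℝ) :
    erfc x = 1 - 2 / √π * ∫ r in (0 : ℝ)..x, Real.exp (-(r ^ 2)) := by
  have h_split := intervalIntegral.integral_interval_add_Ioi (a := 0) (b := x)
    integrable_exp_neg_sq.integrableOn integrable_exp_neg_sq.integrableOn
  have h_norm : 2 / √π * (√π / 2) = 1 := by field_simp
  rw [integral_Ioi_zero_exp_neg_sq] at h_split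
  rw [erfc, ← h_norm, ← h_split]
  ring

lemma hasDerivAt_erfc (x : ℝ) : HasDerivAt erfc (-(2 / √π * Real.exp (-(x ^ 2)))) x := by
  have h_cont : Continuous fun r : ℝ => Real.exp (-(r ^ 2)) := by fun_prop
  rw [funext erfc_eq_one_sub]
  exact ((h_cont.integral_hasStrictDerivAt 0 x).hasDerivAt.const_mul _).const_sub 1

lemma erfc_nonneg (x : ℝ) : 0 ≤ erfc x :=
  mul_nonneg (by positivity) (integral_nonneg fun _ => (Real.exp_pos _).le)

lemma integral_Ioi_exp_neg_sq_le {x : ℝ} (hx : 0 ≤ x) :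
    ∫ r in Ioi x, Real.exp (-(r ^ 2)) ≤ Real.exp (-(x ^ 2)) * (√π / 2) := by
  have h_shift := (measurePreserving_add_right volume x).setIntegral_preimage_emb
    (measurableEmbedding_addRight x) (fun r : ℝ => Real.exp (-(r ^ 2))) (Ioi x)
  rw [preimage_add_const_Ioi, sub_self] at h_shift
  rw [← h_shift, ← integral_Ioi_zero_exp_neg_sq, ← integral_const_mul]
  refine setIntegral_mono_on (integrable_exp_neg_sq.comp_add_right x).integrableOn
    (integrable_exp_neg_sq.const_mul _).integrableOn measurableSet_Ioi fun s hs => ?_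
  rw [← Real.exp_add]
  gcongr
  have h_cross : 0 ≤ s * x := mul_nonneg (le_of_lt hs) hx
  linarith [add_sq s x]

lemma erfc_le_exp_neg_sq {x : ℝ} (hx : 0 ≤ x) : erfc x ≤ Real.exp (-(x ^ 2)) :=
  calc erfc x ≤ 2 / √π * (Real.exp (-(x ^ 2)) * (√π / 2)) :=
        mul_le_mul_of_nonneg_left (integral_Ioi_exp_neg_sq_le hx) (by positivity)
    _ = Real.exp (-(x ^ 2)) := by field_simp

lemma sq_sqrt_two_pi_mul_abs {v : ℝ} (hv : 0 ≤ v) (x : ℝ) :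
    (√(2 * π * v) * |x|) ^ 2 = 2 * π * v * x ^ 2 := by
  rw [mul_pow, Real.sq_sqrt (by positivity), sq_abs]

lemma hasDerivAt_sign_mul_erfc_sqrt {v : ℝ} (hv : 0 < v) (x : ℝ) :
    HasDerivAt (fun w => Real.sign x * erfc (√(2 * π * w) * |x|))
      (-(√(2 * v) * x * Real.exp (-(2 * π * v * x ^ 2)) / v)) v := by
  have h_lin : HasDerivAt (fun w : ℝ => 2 * π * w) (2 * π) v := by
    simpa using (hasDerivAt_id v).const_mul (2 * π)
  have h_sqrt := (h_lin.sqrt (by positivity)).mul_const |x|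
  refine (((hasDerivAt_erfc _).comp v h_sqrt).const_mul (Real.sign x)).congr_deriv ?_
  have h_pi : √π ^ 2 = π := Real.sq_sqrt Real.pi_nonneg
  have h_two_v : √(2 * v) ^ 2 = 2 * v := Real.sq_sqrt (by positivity)
  have h_const : 2 / √π * (2 * π / (2 * √(2 * π * v))) = √(2 * v) / v := by
    have h_factor : √(2 * π * v) = √π * √(2 * v) := by
      rw [← Real.sqrt_mul Real.pi_nonneg]
      congr 1
      ring
    rw [h_factor]
    field_simp
    rw [h_pi, h_two_v]
    ring
  rw [sq_sqrt_two_pi_mul_abs hv.le]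
  linear_combination
    -(Real.sign x * |x| * Real.exp (-(2 * π * v * x ^ 2))) * h_const
      - √(2 * v) / v * Real.exp (-(2 * π * v * x ^ 2)) * real_sign_mul_abs x

end Erfc

section Exponential

lemma eC_add (z w : ℂ) : eC (z + w) = eC z * eC w := by
  rw [eC, mul_add, Complex.exp_add, eC, eC]

lemma conj_eC (z : ℂ) : conj (eC z) = eC (-conj z) := by
  rw [eC, eC, ← Complex.exp_conj]
  simp [Complex.conj_ofNat]

lemma norm_eC (z : ℂ) : ‖eC z‖ = Real.exp (-(2 * π * z.im)) := by
  rw [eC, Complex.norm_exp]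
  simp

lemma eC_ofReal_mul_I (r : ℝ) : eC (r * Complex.I) = (Real.exp (-(2 * π * r)) : ℂ) := by
  rw [eC, Complex.ofReal_exp]
  congr 1
  push_cast
  linear_combination 2 * π * r * Complex.I_sq

lemma hasDerivAt_eC_const_mul (a τ : ℂ) :
    HasDerivAt (fun σ => eC (a * σ)) (2 * π * Complex.I * a * eC (a * τ)) τ := by
  refine (((hasDerivAt_id τ).const_mul a).const_mul (2 * π * Complex.I)).cexp.congr_deriv ?_
  simp only [eC, id_eq]
  ring

lemma norm_eC_half_sq_sub_sq_mul (τ : ℂ) (x y : ℝ) :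
    ‖eC (((y : ℂ) ^ 2 - (x : ℂ) ^ 2) / 2 * τ)‖ = Real.exp (-(π * τ.im * (y ^ 2 - x ^ 2))) := by
  have h_real : ((y : ℂ) ^ 2 - (x : ℂ) ^ 2) / 2 = ((y ^ 2 - x ^ 2) / 2 : ℝ) := by push_cast; rfl
  rw [norm_eC, h_real, Complex.im_ofReal_mul]
  congr 1
  ring

end Exponential

section Derivative

lemma conj_phi (τ : ℂ) (x y : ℝ) :
    conj (phi τ x y) = eC (((y : ℂ) ^ 2 - (x : ℂ) ^ 2) / 2 * τ) *
      (√(2 * τ.im) * x * Real.exp (-(2 * π * τ.im * x ^ 2)) : ℝ) := by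
  have h_exponent : -conj ((x : ℂ) ^ 2 / 2 * τ - (y : ℂ) ^ 2 / 2 * conj τ) =
      ((y : ℂ) ^ 2 - (x : ℂ) ^ 2) / 2 * τ + (τ.im * x ^ 2 : ℝ) * Complex.I := by
    simp only [map_sub, map_mul, map_div₀, map_pow, Complex.conj_ofReal, Complex.conj_conj,
      map_ofNat]
    have h_sub := Complex.sub_conj τ
    push_cast at h_sub ⊢
    linear_combination (x : ℂ) ^ 2 / 2 * h_sub
  rw [phi, map_mul, map_mul, Complex.conj_ofReal, Complex.conj_ofReal, conj_eC, h_exponent, eC_add,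
    eC_ofReal_mul_I, ← mul_assoc (2 * π)]
  push_cast
  ring

lemma phiTilde_eq_eC_mul (τ : ℂ) (x y : ℝ) :
    phiTilde τ x y = eC (((y : ℂ) ^ 2 - (x : ℂ) ^ 2) / 2 * τ) *
      ((Real.sign x * (if x ^ 2 < y ^ 2 then 1 else 0) -
        Real.sign x * erfc (√(2 * π * τ.im) * |x|) : ℝ) : ℂ) := by
  rw [phiTilde, phiPlus, phiStar]
  split_ifs <;> push_cast <;> ring

/-- The real derivative of `τ ↦ φ̃_τ(x, y)`, written as
`πi(y² - x²) φ̃_τ dτ + v⁻¹ conj(φ_τ) dv`. -/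
def phiTildeFDeriv (τ : ℂ) (x y : ℝ) : ℂ →L[ℝ] ℂ :=
  ((π * (y ^ 2 - x ^ 2) : ℝ) * Complex.I * phiTilde τ x y) • (1 : ℂ →L[ℝ] ℂ) +
    Complex.imCLM.smulRight (conj (phi τ x y) / τ.im)

lemma phiTildeFDeriv_apply (τ : ℂ) (x y : ℝ) (z : ℂ) :
    phiTildeFDeriv τ x y z =
      (π * (y ^ 2 - x ^ 2) : ℝ) * Complex.I * phiTilde τ x y * z +
        z.im * (conj (phi τ x y) / τ.im) := by
  simp [phiTildeFDeriv]

lemma hasFDerivAt_phiTilde {τ : ℂ} (hτ : 0 < τ.im) (x y : ℝ) :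
    HasFDerivAt (fun σ => phiTilde σ x y) (phiTildeFDeriv τ x y) τ := by
  have h_hol := (hasDerivAt_eC_const_mul (((y : ℂ) ^ 2 - (x : ℂ) ^ 2) / 2) τ).hasFDerivAt
    |>.restrictScalars ℝ
  have h_im := ((hasDerivAt_sign_mul_erfc_sqrt hτ x).const_sub
    (Real.sign x * (if x ^ 2 < y ^ 2 then 1 else 0))).hasFDerivAt.comp τ Complex.imCLM.hasFDerivAt
  rw [funext fun σ => phiTilde_eq_eC_mul σ x y]
  refine (h_hol.mul (Complex.ofRealCLM.hasFDerivAt.comp τ h_im)).congr_fderiv ?_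
  ext z
  rw [phiTildeFDeriv_apply, phiTilde_eq_eC_mul, conj_phi]
  simp only [add_apply, smul_apply, Function.comp_apply, ContinuousLinearMap.comp_apply,
    ContinuousLinearMap.coe_restrictScalars', ContinuousLinearMap.toSpanSingleton_apply,
    Complex.ofRealCLM_apply, Complex.imCLM_apply, smul_eq_mul]
  push_cast
  ring

lemma xi_eq_of_hasFDerivAt {f : ℂ → ℂ} {A : ℂ →L[ℝ] ℂ} {τ : ℂ} (hf : HasFDerivAt f A τ) :
    xi f τ = 2 * Complex.I * τ.im * conj (1 / 2 * (A 1 + Complex.I * A Complex.I)) := by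
  rw [xi, dbar, hf.fderiv]

lemma xi_phiTilde {τ : ℂ} (hτ : 0 < τ.im) (x y : ℝ) :
    xi (fun σ => phiTilde σ x y) τ = phi τ x y := by
  have h_im : (τ.im : ℂ) ≠ 0 := Complex.ofReal_ne_zero.mpr hτ.ne'
  have h_dbar : phiTildeFDeriv τ x y 1 + Complex.I * phiTildeFDeriv τ x y Complex.I =
      Complex.I * (conj (phi τ x y) / τ.im) := by
    simp only [phiTildeFDeriv_apply, Complex.one_im, Complex.I_im]
    push_cast
    linear_combination π * ((y : ℂ) ^ 2 - (x : ℂ) ^ 2) * Complex.I * phiTilde τ x y * Complex.I_sq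
  rw [xi_eq_of_hasFDerivAt (hasFDerivAt_phiTilde hτ x y), h_dbar]
  simp only [map_mul, map_div₀, map_one, map_ofNat, Complex.conj_I, Complex.conj_conj,
    Complex.conj_ofReal]
  field_simp
  linear_combination -phi τ x y * Complex.I_sq

end Derivative

section Series

variable {ι : Type*}

lemma xi_const_add (c : ℂ) (f : ℂ → ℂ) (τ : ℂ) : xi (fun σ => c + f σ) τ = xi f τ := by
  rw [xi, dbar, fderiv_const_add, xi, dbar]

lemma hasSum_xi {f : ι → ℂ → ℂ} {f' : ι → ℂ → ℂ →L[ℝ] ℂ} {u : ι → ℝ} {s : Set ℂ} {τ : ℂ}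
    (hu : Summable u) (hs : IsOpen s) (hs' : IsPreconnected s)
    (hf : ∀ p, ∀ σ ∈ s, HasFDerivAt (f p) (f' p σ) σ) (hf' : ∀ p, ∀ σ ∈ s, ‖f' p σ‖ ≤ u p)
    (hτ : τ ∈ s) (hfτ : Summable fun p => f p τ) :
    HasSum (fun p => xi (f p) τ) (xi (fun σ => ∑' p, f p σ) τ) := by
  have h_tsum := hasFDerivAt_tsum_of_isPreconnected hu hs hs' hf hf' hτ hfτ hτ
  have h_deriv : HasSum (fun p => f' p τ) (∑' p, f' p τ) :=
    (hu.of_norm_bounded fun p => hf' p τ hτ).hasSum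
  have h_apply (z : ℂ) : HasSum (fun p => f' p τ z) ((∑' p, f' p τ) z) :=
    h_deriv.mapL (ContinuousLinearMap.apply ℝ ℂ z)
  have h_dbar := ((h_apply 1).add ((h_apply Complex.I).mul_left Complex.I)).mul_left (1 / 2)
  rw [xi_eq_of_hasFDerivAt h_tsum]
  refine ((Complex.hasSum_conj'.mpr h_dbar).mul_left (2 * Complex.I * τ.im)).congr_fun fun p => ?_
  exact xi_eq_of_hasFDerivAt (hf p τ hτ)

end Series

section Bounds

/-- The exponent governing the decay of `φ̃_τ(x, y)`: the form `y² - x²` on the cone `y² > x²`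
supporting `φ⁺`, and `x² + y²` elsewhere, where only the Gaussian part `φ*` remains. -/
def decayRate (x y : ℝ) : ℝ := if x ^ 2 < y ^ 2 then y ^ 2 - x ^ 2 else x ^ 2 + y ^ 2

lemma decayRate_le_sq_add_sq (x y : ℝ) : decayRate x y ≤ x ^ 2 + y ^ 2 := by
  unfold decayRate
  split_ifs
  · linarith [sq_nonneg x]
  · exact le_rfl

lemma abs_sq_sub_sq_le_decayRate (x y : ℝ) : |y ^ 2 - x ^ 2| ≤ decayRate x y := by
  unfold decayRate
  split_ifs with h_cone
  · exact (abs_of_pos (sub_pos.mpr h_cone)).le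
  · rw [abs_le]
    constructor <;> linarith [sq_nonneg x, sq_nonneg y]

lemma decayRate_nonneg (x y : ℝ) : 0 ≤ decayRate x y :=
  (abs_nonneg _).trans (abs_sq_sub_sq_le_decayRate x y)

lemma norm_phiPlus_le (τ : ℂ) (x y : ℝ) :
    ‖phiPlus τ x y‖ ≤ Real.exp (-(π * τ.im * decayRate x y)) := by
  unfold phiPlus decayRate
  split_ifs
  · rw [mul_one, norm_mul, norm_eC_half_sq_sub_sq_mul, Complex.norm_real, Real.norm_eq_abs]
    exact mul_le_of_le_one_right (Real.exp_pos _).le (abs_real_sign_le_one x)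
  · simpa using (Real.exp_pos _).le

lemma norm_phiStar_le {τ : ℂ} (hτ : 0 ≤ τ.im) (x y : ℝ) :
    ‖phiStar τ x y‖ ≤ Real.exp (-(π * τ.im * (x ^ 2 + y ^ 2))) := by
  have h_erfc := erfc_le_exp_neg_sq (x := √(2 * π * τ.im) * |x|) (by positivity)
  rw [sq_sqrt_two_pi_mul_abs hτ] at h_erfc
  rw [phiStar, norm_mul, norm_mul, norm_eC_half_sq_sub_sq_mul, Complex.norm_real,
    Complex.norm_real, Real.norm_eq_abs, Real.norm_eq_abs, abs_of_nonneg (erfc_nonneg _)]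
  calc Real.exp (-(π * τ.im * (y ^ 2 - x ^ 2))) * |Real.sign x| * erfc (√(2 * π * τ.im) * |x|)
      ≤ Real.exp (-(π * τ.im * (y ^ 2 - x ^ 2))) * 1 * Real.exp (-(2 * π * τ.im * x ^ 2)) := by
        gcongr
        · exact erfc_nonneg _
        · exact abs_real_sign_le_one x
    _ = Real.exp (-(π * τ.im * (x ^ 2 + y ^ 2))) := by
        rw [mul_one, ← Real.exp_add]
        congr 1
        ring

lemma norm_phiTilde_le {v : ℝ} (hv : 0 ≤ v) {τ : ℂ} (hτ : v ≤ τ.im) (x y : ℝ) :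
    ‖phiTilde τ x y‖ ≤ 2 * Real.exp (-(π * v * decayRate x y)) := by
  have h_rate := decayRate_nonneg x y
  calc ‖phiTilde τ x y‖ ≤ ‖phiPlus τ x y‖ + ‖phiStar τ x y‖ := norm_sub_le _ _
    _ ≤ Real.exp (-(π * τ.im * decayRate x y)) + Real.exp (-(π * τ.im * (x ^ 2 + y ^ 2))) :=
        add_le_add (norm_phiPlus_le τ x y) (norm_phiStar_le (hv.trans hτ) x y)
    _ ≤ Real.exp (-(π * v * decayRate x y)) + Real.exp (-(π * v * decayRate x y)) := by
        gcongr
        · exact mul_nonneg Real.pi_nonneg (hv.trans hτ)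
        · exact decayRate_le_sq_add_sq x y
    _ = 2 * Real.exp (-(π * v * decayRate x y)) := by ring

lemma norm_phi (τ : ℂ) (x y : ℝ) :
    ‖phi τ x y‖ = √(2 * τ.im) * |x| * Real.exp (-(π * τ.im * (x ^ 2 + y ^ 2))) := by
  rw [← RCLike.norm_conj, conj_phi, norm_mul, norm_eC_half_sq_sub_sq_mul, Complex.norm_real,
    Real.norm_eq_abs, abs_mul, abs_mul, abs_of_nonneg (Real.sqrt_nonneg _), Real.abs_exp,
    mul_left_comm, ← Real.exp_add]
  congr 2
  ring

lemma norm_phi_div_im_le {v : ℝ} (hv : 0 < v) {τ : ℂ} (hτ : v ≤ τ.im) (x y : ℝ) :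
    ‖phi τ x y‖ / τ.im ≤
      √2 / √v * (1 + 2 / (π * v)) * Real.exp (-(π * v / 2 * decayRate x y)) := by
  have h_factor : √(2 * τ.im) / τ.im = √2 / √τ.im := by
    rw [Real.sqrt_mul zero_le_two, mul_div_assoc, Real.sqrt_div_self, div_eq_mul_inv]
  have h_abs : |x| ≤ 1 + (x ^ 2 + y ^ 2) := by
    rw [← sq_abs x]
    nlinarith [sq_nonneg (|x| - 1), sq_nonneg y]
  have h_exp : Real.exp (-(π * v * (x ^ 2 + y ^ 2))) ≤
      Real.exp (-(π * v / 2 * (x ^ 2 + y ^ 2))) := by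
    gcongr
    linarith [mul_pos Real.pi_pos hv]
  calc ‖phi τ x y‖ / τ.im
      = √2 / √τ.im * (|x| * Real.exp (-(π * τ.im * (x ^ 2 + y ^ 2)))) := by
        rw [norm_phi, ← h_factor]
        ring
    _ ≤ √2 / √v * ((1 + (x ^ 2 + y ^ 2)) * Real.exp (-(π * v * (x ^ 2 + y ^ 2)))) := by gcongr
    _ ≤ √2 / √v * ((1 + 2 / (π * v)) * Real.exp (-(π * v / 2 * (x ^ 2 + y ^ 2)))) := by
        refine mul_le_mul_of_nonneg_left ?_ (by positivity)
        linarith [mul_exp_neg_mul_le (mul_pos Real.pi_pos hv) (x ^ 2 + y ^ 2)]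
    _ ≤ √2 / √v * ((1 + 2 / (π * v)) * Real.exp (-(π * v / 2 * decayRate x y))) := by
        gcongr
        exact decayRate_le_sq_add_sq x y
    _ = √2 / √v * (1 + 2 / (π * v)) * Real.exp (-(π * v / 2 * decayRate x y)) := by ring

lemma norm_phiTildeFDeriv_le_add {τ : ℂ} (hτ : 0 ≤ τ.im) (x y : ℝ) :
    ‖phiTildeFDeriv τ x y‖ ≤ π * decayRate x y * ‖phiTilde τ x y‖ + ‖phi τ x y‖ / τ.im := by
  have h_hol : ‖((π * (y ^ 2 - x ^ 2) : ℝ) * Complex.I * phiTilde τ x y) • (1 : ℂ →L[ℝ] ℂ)‖ =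
      π * |y ^ 2 - x ^ 2| * ‖phiTilde τ x y‖ := by
    rw [norm_smul, norm_one, mul_one, norm_mul, norm_mul, Complex.norm_I, mul_one,
      Complex.norm_real, Real.norm_eq_abs, abs_mul, abs_of_pos Real.pi_pos]
  have h_im : ‖Complex.imCLM.smulRight (conj (phi τ x y) / τ.im)‖ = ‖phi τ x y‖ / τ.im := by
    rw [ContinuousLinearMap.norm_smulRight_apply, Complex.imCLM_norm, one_mul, norm_div,
      RCLike.norm_conj, Complex.norm_of_nonneg hτ]
  refine (norm_add_le _ _).trans ?_
  rw [h_hol, h_im]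
  gcongr
  exact abs_sq_sub_sq_le_decayRate x y

lemma exists_norm_phiTildeFDeriv_le {v : ℝ} (hv : 0 < v) :
    ∃ C, ∀ τ : ℂ, v ≤ τ.im → ∀ x y : ℝ,
      ‖phiTildeFDeriv τ x y‖ ≤ C * Real.exp (-(π * v / 2 * decayRate x y)) := by
  refine ⟨4 / v + √2 / √v * (1 + 2 / (π * v)), fun τ hτ x y => ?_⟩
  have h_rate := decayRate_nonneg x y
  calc ‖phiTildeFDeriv τ x y‖
      ≤ π * decayRate x y * ‖phiTilde τ x y‖ + ‖phi τ x y‖ / τ.im :=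
        norm_phiTildeFDeriv_le_add (hv.le.trans hτ) x y
    _ ≤ π * decayRate x y * (2 * Real.exp (-(π * v * decayRate x y))) +
          √2 / √v * (1 + 2 / (π * v)) * Real.exp (-(π * v / 2 * decayRate x y)) := by
        gcongr
        · exact norm_phiTilde_le hv.le hτ x y
        · exact norm_phi_div_im_le hv hτ x y
    _ = 2 * π * (decayRate x y * Real.exp (-(π * v * decayRate x y))) +
          √2 / √v * (1 + 2 / (π * v)) * Real.exp (-(π * v / 2 * decayRate x y)) := by ring
    _ ≤ 2 * π * (2 / (π * v) * Real.exp (-(π * v / 2 * decayRate x y))) +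
          √2 / √v * (1 + 2 / (π * v)) * Real.exp (-(π * v / 2 * decayRate x y)) := by
        gcongr ?_ + _
        exact mul_le_mul_of_nonneg_left (mul_exp_neg_mul_le (by positivity) _) (by positivity)
    _ = (4 / v + √2 / √v * (1 + 2 / (π * v))) * Real.exp (-(π * v / 2 * decayRate x y)) := by
        field_simp
        ring

end Bounds

section Families

variable {ι κ : Type*} {X : ι → ℝ × ℝ}

/-- A family of points of `ℝ²` along which `exp(-δ · decayRate)` is summable for every `δ > 0`. This
is the only property of a lattice coset that the convergence of its theta series depends on. -/
def HasThetaDecay (X : ι → ℝ × ℝ) : Prop :=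
  ∀ δ > 0, Summable fun p => Real.exp (-(δ * decayRate (X p).1 (X p).2))

namespace HasThetaDecay

lemma comp_injective (hX : HasThetaDecay X) {f : κ → ι} (hf : f.Injective) :
    HasThetaDecay fun p => X (f p) :=
  fun δ hδ => (hX δ hδ).comp_injective hf

lemma summable_phiTilde (hX : HasThetaDecay X) {τ : ℂ} (hτ : 0 < τ.im) :
    Summable fun p => phiTilde τ (X p).1 (X p).2 :=
  ((hX (π * τ.im) (by positivity)).mul_left 2).of_norm_bounded fun _ =>
    norm_phiTilde_le hτ.le le_rfl _ _

lemma hasSum_phi (hX : HasThetaDecay X) {τ : ℂ} (hτ : 0 < τ.im) :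
    HasSum (fun p => phi τ (X p).1 (X p).2)
      (xi (fun σ => ∑' p, phiTilde σ (X p).1 (X p).2) τ) := by
  have hv : 0 < τ.im / 2 := half_pos hτ
  obtain ⟨C, hC⟩ := exists_norm_phiTildeFDeriv_le hv
  have h_xi := hasSum_xi (s := {σ | τ.im / 2 < σ.im})
    ((hX (π * (τ.im / 2) / 2) (by positivity)).mul_left C)
    (isOpen_lt continuous_const Complex.continuous_im) (convex_halfSpace_im_gt _).isPreconnected
    (fun p σ hσ => hasFDerivAt_phiTilde (hv.trans hσ) (X p).1 (X p).2)
    (fun p σ hσ => hC σ (le_of_lt hσ) (X p).1 (X p).2)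
    (half_lt_self hτ) (hX.summable_phiTilde hτ)
  simpa only [xi_phiTilde hτ] using h_xi

end HasThetaDecay

end Families

section Lattice

variable {N : ℕ} {t : ℝ}

lemma iota_fst_sq_add_snd_sq (N : ℕ) (t x₁ x₂ : ℝ) :
    (iota N t x₁ x₂).1 ^ 2 + (iota N t x₁ x₂).2 ^ 2 =
      (t⁻¹ ^ 2 * x₁ ^ 2 + t ^ 2 * x₂ ^ 2) / N := by
  have h_sqrt : √(2 * N) ^ 2 = 2 * N := Real.sq_sqrt (by positivity)
  simp only [iota, div_pow, h_sqrt]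
  ring

lemma iota_snd_sq_sub_fst_sq (N : ℕ) (ht : t ≠ 0) (x₁ x₂ : ℝ) :
    (iota N t x₁ x₂).2 ^ 2 - (iota N t x₁ x₂).1 ^ 2 = -(2 * (x₁ * x₂)) / N := by
  have h_sqrt : √(2 * N) ^ 2 = 2 * N := Real.sq_sqrt (by positivity)
  simp only [iota, div_pow, h_sqrt]
  linear_combination -(2 * x₁ * x₂) / N * inv_mul_cancel₀ ht

lemma mul_abs_add_abs_le_decayRate_iota (N : ℕ) (ht : t ≠ 0) (m n : ℤ) :
    min 1 (min (t⁻¹ ^ 2) (t ^ 2)) / N * (|(m : ℝ)| + |(n : ℝ)|) ≤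
      decayRate (iota N t m n).1 (iota N t m n).2 := by
  have h_one : min 1 (min (t⁻¹ ^ 2) (t ^ 2)) ≤ 1 := min_le_left _ _
  have h_inv : min 1 (min (t⁻¹ ^ 2) (t ^ 2)) ≤ t⁻¹ ^ 2 := (min_le_right _ _).trans (min_le_left _ _)
  have h_sq : min 1 (min (t⁻¹ ^ 2) (t ^ 2)) ≤ t ^ 2 := (min_le_right _ _).trans (min_le_right _ _)
  rw [div_mul_eq_mul_div, decayRate]
  split_ifs with h_cone
  · rw [← sub_pos, iota_snd_sq_sub_fst_sq N ht] at h_cone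
    have h_neg : (m * n : ℝ) < 0 := by
      by_contra! h_nonneg
      exact h_cone.not_ge (div_nonpos_of_nonpos_of_nonneg (by linarith) N.cast_nonneg)
    have hm : m ≠ 0 := by rintro rfl; simp at h_neg
    have hn : n ≠ 0 := by rintro rfl; simp at h_neg
    rw [iota_snd_sq_sub_fst_sq N ht, ← mul_neg, ← abs_of_neg h_neg]
    refine div_le_div_of_nonneg_right ?_ N.cast_nonneg
    exact (mul_le_of_le_one_left (by positivity) h_one).trans
      (add_abs_le_two_mul_abs_mul_intCast hm hn)
  · rw [iota_fst_sq_add_snd_sq, mul_add]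
    gcongr
    · exact abs_intCast_le_sq m
    · exact abs_intCast_le_sq n

lemma hasThetaDecay_iota (hN : N ≠ 0) (ht : t ≠ 0) :
    HasThetaDecay fun m : ℤ × ℤ => iota N t m.1 m.2 := by
  intro δ hδ
  set κ : ℝ := min 1 (min (t⁻¹ ^ 2) (t ^ 2)) / N
  have hκ : 0 < δ * κ := by positivity
  have h_prod := (summable_exp_neg_mul_abs_int hκ).mul_of_nonneg (summable_exp_neg_mul_abs_int hκ)
    (fun _ => (Real.exp_pos _).le) fun _ => (Real.exp_pos _).le
  refine h_prod.of_nonneg_of_le (fun _ => (Real.exp_pos _).le) fun m => ?_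
  rw [← Real.exp_add, ← neg_add, ← mul_add, mul_assoc]
  gcongr
  exact mul_abs_add_abs_le_decayRate_iota N ht m.1 m.2

lemma injective_residueClass (hN : N ≠ 0) (h : ℤ × ℤ) :
    Function.Injective fun p : ℤ × ℤ => (h.1 + N * p.1, h.2 + N * p.2) :=
  have h_coord (a : ℤ) : Function.Injective fun k : ℤ => a + N * k :=
    (add_right_injective a).comp (mul_right_injective₀ (Int.natCast_ne_zero.mpr hN))
  (h_coord h.1).prodMap (h_coord h.2)

lemma hasThetaDecay_iota_residueClass (hN : N ≠ 0) (ht : t ≠ 0) (h : ℤ × ℤ) :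
    HasThetaDecay fun p : ℤ × ℤ => iota N t ((h.1 + N * p.1 : ℤ) : ℝ) ((h.2 + N * p.2 : ℤ) : ℝ) :=
  ((hasThetaDecay_iota hN ht).comp_injective (injective_residueClass hN h) :)

end Lattice

theorem stmt17_general {ι : Type*} {X : ι → ℝ × ℝ} (hX : HasThetaDecay X) (c : ℂ) :
    (∀ τ : ℂ, 0 < τ.im →
      Summable (fun p => phi τ (X p).1 (X p).2) ∧ Summable (fun p => phiTilde τ (X p).1 (X p).2)) ∧
    (∀ τ : ℂ, 0 < τ.im →
      xi (fun σ => c + ∑' p, phiTilde σ (X p).1 (X p).2) τ = ∑' p, phi τ (X p).1 (X p).2) := by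
  refine ⟨fun τ hτ => ⟨(hX.hasSum_phi hτ).summable, hX.summable_phiTilde hτ⟩, fun τ hτ => ?_⟩
  rw [xi_const_add, (hX.hasSum_phi hτ).tsum_eq]

/-- the series defining `Θ_h(τ,t)` and `Θ̃_h(τ,t)` converge absolutely
for every `τ` in the upper half-plane, and `ξ(Θ̃_h(·,t))(τ) = Θ_h(τ,t)`. -/
theorem stmt17 (N : ℕ) (hN : 0 < N) (h : ℤ × ℤ) (t : ℝ) (ht : 0 < t) :
    (∀ τ : ℂ, 0 < τ.im →
      Summable (fun p : ℤ × ℤ =>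
        phi τ (iota N t ((h.1 + N * p.1 : ℤ) : ℝ) ((h.2 + N * p.2 : ℤ) : ℝ)).1
              (iota N t ((h.1 + N * p.1 : ℤ) : ℝ) ((h.2 + N * p.2 : ℤ) : ℝ)).2) ∧
      Summable (fun p : ℤ × ℤ =>
        phiTilde τ (iota N t ((h.1 + N * p.1 : ℤ) : ℝ) ((h.2 + N * p.2 : ℤ) : ℝ)).1
                   (iota N t ((h.1 + N * p.1 : ℤ) : ℝ) ((h.2 + N * p.2 : ℤ) : ℝ)).2)) ∧
    (∀ τ : ℂ, 0 < τ.im →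
      xi (fun σ => ThetaTilde N h σ t) τ = Theta N h τ t) :=
  stmt17_general (hasThetaDecay_iota_residueClass hN.ne' ht.ne' h) (cH0 N h)

end
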